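/- There exists an absolute constant C such that for every finite irreducible reversible Markov chain (Ω,P,π) and every function f : Ω → ℝ: E_π[ sup_{t ≥ 0} (t+1)² · |(A_{t+1} f − A_t f)(x)|² ] ≤ C · Var_π(f), where A_t = (P^t + P^{t+1})/2 (so A_{t+1} f − A_t f = (P^{t+2} − P^t) f / 2) and the supremum is over integers t ≥ 0. -/

import Mathlib

open Matrix Filter Asymptotics

/-- `P` is a stochastic matrix. -/
def IsStochastic {Ω : Type*} [Fintype Ω] (P : Matrix Ω Ω ℝ) : Prop :=
  (∀ x y, 0 ≤ P x y) ∧ ∀ x, ∑ y, P x y = 1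

/-- `P` is irreducible. -/
def IsIrreducibleMatrix {Ω : Type*} [Fintype Ω] [DecidableEq Ω] (P : Matrix Ω Ω ℝ) : Prop :=
  ∀ x y, ∃ n : ℕ, 0 < (P ^ n) x y

/-- `μ` is a probability vector. -/
def IsProbVec {Ω : Type*} [Fintype Ω] (μ : Ω → ℝ) : Prop :=
  (∀ x, 0 ≤ μ x) ∧ ∑ x, μ x = 1

/-- The chain `(P, pi)` is reversible. -/
def IsReversible {Ω : Type*} [Fintype Ω] (P : Matrix Ω Ω ℝ) (pi : Ω → ℝ) : Prop :=
  ∀ x y, pi x * P x y = pi y * P y x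

/-- A finite irreducible Markov chain `P` with stationary distribution `pi`. -/
def IsMC {Ω : Type*} [Fintype Ω] [DecidableEq Ω] (P : Matrix Ω Ω ℝ) (pi : Ω → ℝ) : Prop :=
  IsStochastic P ∧ IsIrreducibleMatrix P ∧ IsProbVec pi ∧ pi ᵥ* P = pi

/-- A finite irreducible reversible Markov chain `P` with stationary distribution `pi`. -/
def IsRevMC {Ω : Type*} [Fintype Ω] [DecidableEq Ω] (P : Matrix Ω Ω ℝ) (pi : Ω → ℝ) : Prop :=
  IsMC P pi ∧ IsReversible P pi

/-- Total-variation distance between two measures on a finite set. -/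
noncomputable def tvDist {Ω : Type*} [Fintype Ω] (μ ν : Ω → ℝ) : ℝ :=
  (∑ x, |μ x - ν x|) / 2

/-- The lazy version `(I + P)/2` of `P`. -/
noncomputable def lazyM {Ω : Type*} [Fintype Ω] [DecidableEq Ω] (P : Matrix Ω Ω ℝ) :
    Matrix Ω Ω ℝ :=
  (2 : ℝ)⁻¹ • (1 + P)

/-- `d_c(t, μ)`: TV distance from stationarity of the continuous-time chain at time `t`,
started from `μ`. -/
noncomputable def contDist {Ω : Type*} [Fintype Ω] [DecidableEq Ω] (P : Matrix Ω Ω ℝ) (pi : Ω → ℝ)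
    (t : ℝ) (μ : Ω → ℝ) : ℝ :=
  tvDist (fun y => ∑' k : ℕ, Real.exp (-t) * t ^ k / (Nat.factorial k) * (μ ᵥ* (P ^ k)) y) pi

/-- `d_L(t, μ)`: TV distance from stationarity of the lazy chain at (discrete) time `t`,
started from `μ`. -/
noncomputable def lazyDist {Ω : Type*} [Fintype Ω] [DecidableEq Ω] (P : Matrix Ω Ω ℝ)
    (pi : Ω → ℝ) (t : ℝ) (μ : Ω → ℝ) : ℝ :=
  tvDist (μ ᵥ* (lazyM P ^ ⌊t⌋₊)) pi

/-- `d_ave(t, μ)`: TV distance from stationarity of the averaged chain at (discrete) time `t`,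
started from `μ`. -/
noncomputable def aveDist {Ω : Type*} [Fintype Ω] [DecidableEq Ω] (P : Matrix Ω Ω ℝ) (pi : Ω → ℝ)
    (t : ℝ) (μ : Ω → ℝ) : ℝ :=
  tvDist (fun y => ((μ ᵥ* (P ^ ⌊t⌋₊)) y + (μ ᵥ* (P ^ (⌊t⌋₊ + 1))) y) / 2) pi

/-- The point mass at `x`. -/
noncomputable def deltaMass {Ω : Type*} [DecidableEq Ω] (x : Ω) : Ω → ℝ :=
  fun y => if y = x then 1 else 0

/-- Worst-case continuous-time distance `d_c(t)`. -/
noncomputable def contDistMax {Ω : Type*} [Fintype Ω] [DecidableEq Ω] (P : Matrix Ω Ω ℝ)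
    (pi : Ω → ℝ) (t : ℝ) : ℝ :=
  ⨆ x : Ω, contDist P pi t (deltaMass x)

/-- Worst-case lazy distance `d_L(t)`. -/
noncomputable def lazyDistMax {Ω : Type*} [Fintype Ω] [DecidableEq Ω] (P : Matrix Ω Ω ℝ)
    (pi : Ω → ℝ) (t : ℝ) : ℝ :=
  ⨆ x : Ω, lazyDist P pi t (deltaMass x)

/-- Worst-case averaged distance `d_ave(t)`. -/
noncomputable def aveDistMax {Ω : Type*} [Fintype Ω] [DecidableEq Ω] (P : Matrix Ω Ω ℝ)
    (pi : Ω → ℝ) (t : ℝ) : ℝ :=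
  ⨆ x : Ω, aveDist P pi t (deltaMass x)

/-- `φ_{α,C}(t) = t + ⌈C t^{(1+2α)/2} √(α log t)⌉`. -/
noncomputable def phiAC (α C t : ℝ) : ℝ :=
  t + ((⌈C * t ^ ((1 + 2 * α) / 2) * Real.sqrt (α * Real.log t)⌉ : ℤ) : ℝ)

/-- `ψ_{α,C}(x) = min (1, x + C |log(2x)|^{-α})`. -/
noncomputable def psiAC (α C x : ℝ) : ℝ :=
  min 1 (x + C * |Real.log (2 * x)| ^ (-α))

/-- `t_c(ε)`, the `ε`-mixing time of the continuous-time chain. -/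
noncomputable def contMix {Ω : Type*} [Fintype Ω] [DecidableEq Ω] (P : Matrix Ω Ω ℝ)
    (pi : Ω → ℝ) (ε : ℝ) : ℝ :=
  sInf {t : ℝ | 0 ≤ t ∧ contDistMax P pi t ≤ ε}

/-- `t_L(ε)`, the `ε`-mixing time of the lazy chain. -/
noncomputable def lazyMix {Ω : Type*} [Fintype Ω] [DecidableEq Ω] (P : Matrix Ω Ω ℝ)
    (pi : Ω → ℝ) (ε : ℝ) : ℕ :=
  sInf {t : ℕ | lazyDistMax P pi t ≤ ε}

/-- `t_ave(ε)`, the `ε`-mixing time of the averaged chain. -/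
noncomputable def aveMix {Ω : Type*} [Fintype Ω] [DecidableEq Ω] (P : Matrix Ω Ω ℝ)
    (pi : Ω → ℝ) (ε : ℝ) : ℕ :=
  sInf {t : ℕ | aveDistMax P pi t ≤ ε}

/-!
Let `T` be a self-adjoint contraction of `L²(π)`. Self-adjointness gives
`Δ² (n ↦ ‖Tⁿ v‖²) = (n ↦ ‖Tⁿ (T² v - v)‖²)`, so the energies `‖Tⁿ v‖²` form a completely monotone
sequence. Repeated summation by parts then bounds both `∑ⱼ (j + 1) ‖Tʲ D‖²` and
`∑ⱼ (j + 3 choose 3) ‖Tʲ (T² D - D)‖²` by `‖f‖²`, where `D = T² f - f`. Telescoping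
`(t + 1)² |Tᵗ D|²` along steps of length two dominates it pointwise by a combination of these two
square functions, uniformly in `t`. A reversible transition matrix is a self-adjoint contraction,
and replacing `f` by `f - c` does not change `P^{t+2} f - P^t f`.
-/

section CompletelyMonotone

open fwdDiff

/-- A real sequence is completely monotone if its iterated differences alternate in sign,
starting with a nonnegative sequence. -/
def IsCompletelyMonotone (a : ℕ → ℝ) : Prop :=
  ∀ k n, 0 ≤ (-1) ^ k * (Δ_[1] ^[k] a) n

lemma sum_choose_mul_fwdDiff (b : ℕ → ℝ) (k N : ℕ) :
    ∑ j ∈ Finset.range N, ((j + (k + 1)).choose (k + 1) : ℝ) * Δ_[1] b j =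
      ((N + k).choose (k + 1) : ℝ) * b N -
        ∑ j ∈ Finset.range N, ((j + k).choose k : ℝ) * b j := by
  induction N with
  | zero => simp
  | succ N ih =>
    have pascal : ((N + k + 1).choose (k + 1) : ℝ) =
        (N + k).choose k + (N + k).choose (k + 1) := by
      exact_mod_cast Nat.choose_succ_succ (N + k) k
    rw [Finset.sum_range_succ, Finset.sum_range_succ, ih, fwdDiff, ← add_assoc N k 1,
      show N + 1 + k = N + k + 1 by ring, pascal]
    ring

theorem IsCompletelyMonotone.sum_choose_mul_le {a : ℕ → ℝ} (ha : IsCompletelyMonotone a)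
    (k N : ℕ) :
    ∑ j ∈ Finset.range N, ((j + k).choose k : ℝ) * ((-1) ^ (k + 1) * (Δ_[1] ^[k + 1] a) j) ≤
      a 0 := by
  induction k with
  | zero =>
    have telescope : ∑ j ∈ Finset.range N, (a (j + 1) - a j) = a N - a 0 := Finset.sum_range_sub a N
    have aN_nonneg : 0 ≤ a N := by simpa using ha 0 N
    simp only [Nat.choose_zero_right, Nat.cast_one, one_mul, zero_add, pow_one, neg_mul,
      Function.iterate_one, fwdDiff, Finset.sum_neg_distrib, telescope]
    linarith
  | succ k ih =>
    have boundary_nonneg := mul_nonneg ((N + k).choose (k + 1)).cast_nonneg (ha (k + 1) N)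
    calc ∑ j ∈ Finset.range N, ((j + (k + 1)).choose (k + 1) : ℝ) *
          ((-1) ^ (k + 2) * (Δ_[1] ^[k + 2] a) j)
        = (-1) ^ (k + 2) * ∑ j ∈ Finset.range N,
            ((j + (k + 1)).choose (k + 1) : ℝ) * Δ_[1] (Δ_[1] ^[k + 1] a) j := by
          simp only [Function.iterate_succ_apply' _ (k + 1), Finset.mul_sum, mul_left_comm]
      _ = ∑ j ∈ Finset.range N, ((j + k).choose k : ℝ) *
            ((-1) ^ (k + 1) * (Δ_[1] ^[k + 1] a) j) -
          ((N + k).choose (k + 1) : ℝ) * ((-1) ^ (k + 1) * (Δ_[1] ^[k + 1] a) N) := by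
          simp only [sum_choose_mul_fwdDiff, mul_left_comm _ ((-1 : ℝ) ^ (k + 1)),
            ← Finset.mul_sum]
          ring
      _ ≤ a 0 := by linarith

end CompletelyMonotone

section OrbitEnergy

open fwdDiff

variable {E : Type*} [AddCommGroup E] [Module ℝ E] {B : LinearMap.BilinForm ℝ E}
  {T : Module.End ℝ E}

/-- The energies `B (Tⁿ v) (Tⁿ v)` along the orbit of `v` under `T`; the squared norms of the
iterates when `B` is an inner product. -/
def orbitEnergy (B : LinearMap.BilinForm ℝ E) (T : Module.End ℝ E) (v : E) (n : ℕ) : ℝ :=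
  B ((T ^ n) v) ((T ^ n) v)

lemma fwdDiff_fwdDiff_orbitEnergy (hT : B.IsSelfAdjoint T) (v : E) :
    Δ_[1] (Δ_[1] (orbitEnergy B T v)) = orbitEnergy B T ((T ^ 2) v - v) := by
  ext n
  set u := (T ^ n) v with hu
  have pow_apply_sub : (T ^ n) ((T ^ 2) v - v) = T (T u) - u := by
    rw [map_sub, ← Module.End.mul_apply, ← pow_add, add_comm, pow_add, Module.End.mul_apply,
      pow_two, Module.End.mul_apply]
  have adjoint_left : B (T (T u)) u = B (T u) (T u) := hT _ _
  have adjoint_right : B u (T (T u)) = B (T u) (T u) := (hT _ _).symm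
  simp only [fwdDiff, orbitEnergy, pow_succ' T n, pow_succ' T (n + 1), Module.End.mul_apply, ← hu,
    pow_apply_sub, map_sub, LinearMap.sub_apply, adjoint_left, adjoint_right]

theorem isCompletelyMonotone_orbitEnergy (hB : B.IsNonneg) (hT : B.IsSelfAdjoint T)
    (contr : ∀ v, B (T v) (T v) ≤ B v v) (v : E) :
    IsCompletelyMonotone (orbitEnergy B T v) := by
  intro k n
  induction k using Nat.twoStepInduction generalizing v with
  | zero => simpa [orbitEnergy] using hB.nonneg ((T ^ n) v)
  | one => simpa [fwdDiff, orbitEnergy, pow_succ'] using contr ((T ^ n) v)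
  | more k ih _ =>
    rw [Function.iterate_succ_apply, Function.iterate_succ_apply, fwdDiff_fwdDiff_orbitEnergy hT,
      pow_add, neg_one_sq, mul_one]
    exact ih _

lemma sum_mul_orbitEnergy_sq_sub_le (hB : B.IsNonneg) (hT : B.IsSelfAdjoint T)
    (contr : ∀ v, B (T v) (T v) ≤ B v v) (v : E) (N : ℕ) :
    ∑ j ∈ Finset.range N, ((j : ℝ) + 1) * orbitEnergy B T ((T ^ 2) v - v) j ≤ B v v := by
  simpa [fwdDiff_fwdDiff_orbitEnergy hT, orbitEnergy] using
    (isCompletelyMonotone_orbitEnergy hB hT contr v).sum_choose_mul_le 1 N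

lemma sum_choose_mul_orbitEnergy_sq_sub_sq_sub_le (hB : B.IsNonneg) (hT : B.IsSelfAdjoint T)
    (contr : ∀ v, B (T v) (T v) ≤ B v v) (v : E) (N : ℕ) :
    ∑ j ∈ Finset.range N, ((j + 3).choose 3 : ℝ) *
      orbitEnergy B T ((T ^ 2) ((T ^ 2) v - v) - ((T ^ 2) v - v)) j ≤ B v v := by
  simpa [fwdDiff_fwdDiff_orbitEnergy hT, orbitEnergy, Even.neg_one_pow (by decide : Even 4)] using
    (isCompletelyMonotone_orbitEnergy hB hT contr v).sum_choose_mul_le 3 N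

end OrbitEnergy

section Maximal

lemma six_mul_choose_add_three (n : ℕ) :
    6 * ((n + 3).choose 3 : ℝ) = ((n : ℝ) + 1) * (n + 2) * (n + 3) := by
  have rising : (n + 3) * ((n + 2) * (n + 1)) = 6 * (n + 3).choose 3 := by
    rw [← show Nat.factorial 3 = 6 from rfl, ← Nat.ascFactorial_eq_factorial_mul_choose]
    simp [Nat.ascFactorial, add_comm, add_left_comm]
  have rising_cast : ((n : ℝ) + 3) * ((n + 2) * (n + 1)) = 6 * ((n + 3).choose 3 : ℝ) := by
    exact_mod_cast rising
  linarith

lemma sq_mul_sq_add_two_le (d : ℕ → ℝ) (t : ℕ) :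
    ((t : ℝ) + 3) ^ 2 * d (t + 2) ^ 2 ≤ ((t : ℝ) + 1) ^ 2 * d t ^ 2 +
      5 * (((t : ℝ) + 3) * d (t + 2) ^ 2) +
      6 * (((t + 3).choose 3 : ℝ) * (d (t + 2) - d t) ^ 2) := by
  rw [← mul_assoc 6, six_mul_choose_add_three]
  set D := d (t + 2)
  set e := D - d t
  have d_eq : d t = D - e := by ring
  have cross_le : 2 * (t + 1 : ℝ) ^ 2 * (D * e) ≤ (t + 1) * D ^ 2 + (t + 1) ^ 3 * e ^ 2 := by
    linarith [show 0 ≤ (t + 1) * (D - (t + 1) * e) ^ 2 by positivity,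
      show (t + 1) * (D - (t + 1) * e) ^ 2 = (t + 1) * D ^ 2 + (t + 1) ^ 3 * e ^ 2 -
        2 * (t + 1) ^ 2 * (D * e) by ring]
  have cube_le : (t + 1 : ℝ) ^ 3 * e ^ 2 ≤ (t + 1) * (t + 2) * (t + 3) * e ^ 2 := by
    rw [pow_succ, pow_two]
    gcongr <;> linarith
  rw [d_eq]
  linarith [sq_nonneg D, sq_nonneg ((t + 1) * e),
    show (t + 1) ^ 2 * (D - e) ^ 2 = (t + 1) ^ 2 * D ^ 2 - 2 * (t + 1) ^ 2 * (D * e) +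
      ((t + 1) * e) ^ 2 by ring]

lemma sq_mul_sq_le_sum (d : ℕ → ℝ) (t : ℕ) :
    ((t : ℝ) + 1) ^ 2 * d t ^ 2 ≤
      5 * ∑ j ∈ Finset.range (t + 1), ((j : ℝ) + 1) * d j ^ 2 +
      6 * ∑ j ∈ Finset.range t, ((j + 3).choose 3 : ℝ) * (d (j + 2) - d j) ^ 2 := by
  induction t using Nat.twoStepInduction with
  | zero =>
    simp only [zero_add, Finset.range_one, Finset.sum_singleton, Finset.range_zero,
      Finset.sum_empty, Nat.cast_zero]
    linarith [sq_nonneg (d 0)]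
  | one =>
    simp only [Finset.sum_range_succ, Finset.range_zero, Finset.sum_empty, zero_add,
      Nat.cast_zero, Nat.cast_one, Nat.choose_self]
    linarith [sq_nonneg (d 0), sq_nonneg (d 1), sq_nonneg (d 2 - d 0)]
  | more t ih _ =>
    have sum_d_grows : ∑ j ∈ Finset.range (t + 1), ((j : ℝ) + 1) * d j ^ 2 +
        ((t : ℝ) + 3) * d (t + 2) ^ 2 ≤ ∑ j ∈ Finset.range (t + 3), ((j : ℝ) + 1) * d j ^ 2 := by
      have : 0 ≤ ((t : ℝ) + 1 + 1) * d (t + 1) ^ 2 := by positivity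
      rw [Finset.sum_range_succ _ (t + 2), Finset.sum_range_succ _ (t + 1)]
      push_cast
      linarith
    have sum_diff_grows :
        ∑ j ∈ Finset.range t, ((j + 3).choose 3 : ℝ) * (d (j + 2) - d j) ^ 2 +
          ((t + 3).choose 3 : ℝ) * (d (t + 2) - d t) ^ 2 ≤
        ∑ j ∈ Finset.range (t + 2), ((j + 3).choose 3 : ℝ) * (d (j + 2) - d j) ^ 2 := by
      rw [← Finset.sum_range_succ, Finset.sum_range_succ _ (t + 1)]
      exact le_add_of_nonneg_right (by positivity)
    calc (((t + 2 : ℕ) : ℝ) + 1) ^ 2 * d (t + 2) ^ 2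
        = ((t : ℝ) + 3) ^ 2 * d (t + 2) ^ 2 := by push_cast; ring
      _ ≤ _ := by linarith [sq_mul_sq_add_two_le d t]

lemma sum_mul_ciSup_le_of_monotone {ι κ : Type*} [Fintype ι] [Preorder κ] [IsDirectedOrder κ]
    [Nonempty κ] {w : ι → ℝ} (hw : ∀ i, 0 ≤ w i) {φ F : ι → κ → ℝ} (hφF : ∀ i n, φ i n ≤ F i n)
    (F_mono : ∀ i, Monotone (F i)) (F_nonneg : ∀ i n, 0 ≤ F i n) {K : ℝ}
    (hK : ∀ n, ∑ i, w i * F i n ≤ K) :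
    ∑ i, w i * ⨆ n, φ i n ≤ K := by
  have wF_mono (i : ι) : Monotone fun n ↦ w i * F i n := (F_mono i).const_mul (hw i)
  have wF_bdd (i : ι) : BddAbove (Set.range fun n ↦ w i * F i n) := by
    refine ⟨K, Set.forall_mem_range.2 fun n ↦ le_trans ?_ (hK n)⟩
    exact Finset.single_le_sum (f := fun i ↦ w i * F i n)
      (fun j _ ↦ mul_nonneg (hw j) (F_nonneg j n)) (Finset.mem_univ i)
  calc ∑ i, w i * ⨆ n, φ i n
      ≤ ∑ i, ⨆ n, w i * F i n := by
        refine Finset.sum_le_sum fun i _ ↦ ?_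
        rw [Real.mul_iSup_of_nonneg (hw i)]
        exact ciSup_mono (wF_bdd i) fun n ↦ mul_le_mul_of_nonneg_left (hφF i n) (hw i)
    _ ≤ K := le_of_tendsto'
        (tendsto_finsetSum _ fun i _ ↦ tendsto_atTop_ciSup (wF_mono i) (wF_bdd i)) hK

variable {Ω : Type*} [Fintype Ω] {w : Ω → ℝ}

/-- The bilinear form `⟨f, g⟩ = ∑ x, w x * f x * g x` of `L²(w)`, degenerate where `w` vanishes. -/
noncomputable def weightedForm (w : Ω → ℝ) : LinearMap.BilinForm ℝ (Ω → ℝ) :=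
  ∑ x, w x • LinearMap.BilinForm.linMulLin (LinearMap.proj x) (LinearMap.proj x)

lemma weightedForm_apply (w f g : Ω → ℝ) : weightedForm w f g = ∑ x, w x * (f x * g x) := by
  simp [weightedForm, LinearMap.sum_apply]

lemma weightedForm_self (w f : Ω → ℝ) : weightedForm w f f = ∑ x, w x * f x ^ 2 := by
  simp only [weightedForm_apply, pow_two]

lemma isNonneg_weightedForm (hw : ∀ x, 0 ≤ w x) : (weightedForm w).IsNonneg where
  nonneg f := by
    rw [weightedForm_self]
    exact Finset.sum_nonneg fun x _ ↦ mul_nonneg (hw x) (sq_nonneg _)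

lemma sum_mul_sum_mul_sq_pow_apply (T : Module.End ℝ (Ω → ℝ)) (v : Ω → ℝ) (c : ℕ → ℝ) (N : ℕ) :
    ∑ x, w x * ∑ j ∈ Finset.range N, c j * (T ^ j) v x ^ 2 =
      ∑ j ∈ Finset.range N, c j * orbitEnergy (weightedForm w) T v j := by
  simp only [orbitEnergy, weightedForm_self, Finset.mul_sum]
  rw [Finset.sum_comm]
  simp only [mul_left_comm]

/-- A form of Stein's maximal inequality; `T` need not be positivity-preserving. -/
theorem sum_mul_ciSup_sq_pow_add_two_sub_pow_le (hw : ∀ x, 0 ≤ w x) {T : Module.End ℝ (Ω → ℝ)}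
    (hT : (weightedForm w).IsSelfAdjoint T)
    (contr : ∀ v, weightedForm w (T v) (T v) ≤ weightedForm w v v) (f : Ω → ℝ) :
    ∑ x, w x * ⨆ t : ℕ, ((t : ℝ) + 1) ^ 2 * ((T ^ (t + 2)) f x - (T ^ t) f x) ^ 2 ≤
      11 * ∑ x, w x * f x ^ 2 := by
  have pow_sq_sub (v : Ω → ℝ) (t : ℕ) (x : Ω) :
      (T ^ t) ((T ^ 2) v - v) x = (T ^ (t + 2)) v x - (T ^ t) v x := by
    rw [map_sub, pow_add, Module.End.mul_apply, Pi.sub_apply]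
  set D := (T ^ 2) f - f
  set e := (T ^ 2) D - D
  let F (x : Ω) (t : ℕ) : ℝ :=
    5 * ∑ j ∈ Finset.range (t + 1), ((j : ℝ) + 1) * (T ^ j) D x ^ 2 +
      6 * ∑ j ∈ Finset.range t, ((j + 3).choose 3 : ℝ) * (T ^ j) e x ^ 2
  refine sum_mul_ciSup_le_of_monotone hw (F := F) (fun x t ↦ ?_) (fun x s t hst ↦ ?_)
    (fun x t ↦ by positivity) (fun t ↦ ?_)
  · simpa only [F, e, pow_sq_sub D, D, pow_sq_sub f] using sq_mul_sq_le_sum (fun j ↦ (T ^ j) D x) t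
  · dsimp only [F]
    gcongr
  · have square_D := sum_mul_orbitEnergy_sq_sub_le (isNonneg_weightedForm hw) hT contr f (t + 1)
    have square_e :=
      sum_choose_mul_orbitEnergy_sq_sub_sq_sub_le (isNonneg_weightedForm hw) hT contr f t
    simp only [F, mul_add, Finset.sum_add_distrib, mul_left_comm (w _), ← Finset.mul_sum,
      sum_mul_sum_mul_sq_pow_apply]
    rw [← weightedForm_self]
    linarith

end Maximal

section ReversibleChain

variable {Ω : Type*} [Fintype Ω] {P : Matrix Ω Ω ℝ} {pi : Ω → ℝ}

lemma IsStochastic.mem_rowStochastic [DecidableEq Ω] (hP : IsStochastic P) :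
    P ∈ rowStochastic ℝ Ω :=
  mem_rowStochastic_iff_sum.2 hP

lemma IsReversible.vecMul_eq (hrev : IsReversible P pi) (hP : IsStochastic P) :
    pi ᵥ* P = pi := by
  ext y
  calc ∑ x, pi x * P x y = ∑ x, pi y * P y x := Finset.sum_congr rfl fun x _ ↦ hrev x y
    _ = pi y := by rw [← Finset.mul_sum, hP.2 y, mul_one]

lemma IsReversible.isSelfAdjoint_mulVecLin (hrev : IsReversible P pi) :
    (weightedForm pi).IsSelfAdjoint P.mulVecLin := by
  intro f g
  simp only [weightedForm_apply, mulVecLin_apply, mulVec, dotProduct, Finset.mul_sum,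
    Finset.sum_mul]
  rw [Finset.sum_comm]
  refine Finset.sum_congr rfl fun y _ ↦ Finset.sum_congr rfl fun x _ ↦ ?_
  linear_combination f y * g x * hrev x y

lemma IsStochastic.sq_mulVec_le (hP : IsStochastic P) (f : Ω → ℝ) (x : Ω) :
    (P *ᵥ f) x ^ 2 ≤ (P *ᵥ (f ^ 2)) x :=
  Real.pow_arith_mean_le_arith_mean_pow_of_even Finset.univ (P x) f (fun y _ ↦ hP.1 x y) (hP.2 x)
    even_two

lemma IsStochastic.weightedForm_mulVec_le (hP : IsStochastic P) (hpi : ∀ x, 0 ≤ pi x)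
    (stationary : pi ᵥ* P = pi) (f : Ω → ℝ) :
    weightedForm pi (P *ᵥ f) (P *ᵥ f) ≤ weightedForm pi f f := by
  calc weightedForm pi (P *ᵥ f) (P *ᵥ f)
      = ∑ x, pi x * (P *ᵥ f) x ^ 2 := weightedForm_self pi _
    _ ≤ pi ⬝ᵥ (P *ᵥ (f ^ 2)) :=
        Finset.sum_le_sum fun x _ ↦ mul_le_mul_of_nonneg_left (hP.sq_mulVec_le f x) (hpi x)
    _ = pi ⬝ᵥ (f ^ 2) := by rw [dotProduct_mulVec, stationary]
    _ = weightedForm pi f f := (weightedForm_self pi f).symm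

lemma IsStochastic.pow_mulVec_sub_const [DecidableEq Ω] (hP : IsStochastic P) (t : ℕ) (f : Ω → ℝ)
    (c : ℝ) (x : Ω) : ((P ^ t) *ᵥ fun y ↦ f y - c) x = ((P ^ t) *ᵥ f) x - c := by
  have const : (fun y ↦ f y - c) = f - c • (1 : Ω → ℝ) := by ext; simp
  rw [const, mulVec_sub, mulVec_smul,
    one_vecMul_of_mem_rowStochastic (pow_mem hP.mem_rowStochastic t)]
  simp

end ReversibleChain

theorem maximal_inequality_ave_general {Ω : Type*} [Fintype Ω] [DecidableEq Ω]
    {P : Matrix Ω Ω ℝ} {pi : Ω → ℝ} (hP : IsStochastic P) (hpi : ∀ x, 0 ≤ pi x)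
    (hrev : IsReversible P pi) (f : Ω → ℝ) (c : ℝ) :
    ∑ x, pi x * (⨆ t : ℕ, ((t : ℝ) + 1) ^ 2 *
        |(((P ^ (t + 2)) *ᵥ f) x - ((P ^ t) *ᵥ f) x) / 2| ^ 2) ≤
      11 / 4 * ∑ x, pi x * (f x - c) ^ 2 := by
  let g : Ω → ℝ := (1 / 2 : ℝ) • fun x ↦ f x - c
  have pow_g (t : ℕ) (x : Ω) : (P.mulVecLin ^ t) g x = (((P ^ t) *ᵥ f) x - c) / 2 := by
    rw [← toLin'_apply', ← toLin'_pow, toLin'_apply, mulVec_smul, Pi.smul_apply,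
      hP.pow_mulVec_sub_const, smul_eq_mul]
    ring
  have diff_g (t : ℕ) (x : Ω) : (P.mulVecLin ^ (t + 2)) g x - (P.mulVecLin ^ t) g x =
      (((P ^ (t + 2)) *ᵥ f) x - ((P ^ t) *ᵥ f) x) / 2 := by
    rw [pow_g, pow_g]
    ring
  have norm_g : 11 * ∑ x, pi x * g x ^ 2 = 11 / 4 * ∑ x, pi x * (f x - c) ^ 2 := by
    simp only [g, Pi.smul_apply, smul_eq_mul, mul_pow, mul_left_comm (pi _), ← Finset.mul_sum]
    ring
  simpa only [diff_g, norm_g, sq_abs] using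
    sum_mul_ciSup_sq_pow_add_two_sub_pow_le hpi hrev.isSelfAdjoint_mulVecLin
      (hP.weightedForm_mulVec_le hpi (hrev.vecMul_eq hP)) g

/-- **Corollary 2.3 of Hermon–Peres, second inequality (Stein's maximal inequality for the
averaged chain).** There is an absolute constant `C` such that for every finite irreducible
reversible Markov chain and every `f : Ω → ℝ`,
`E_π[sup_{t ≥ 0} (t+1)² |Δ A_t f|²] ≤ C Var_π f`, where `Δ A_t f = (P^{t+2} - P^t) f / 2`. -/
theorem maximal_inequality_ave :
    ∃ C : ℝ, 0 < C ∧
      ∀ (Ω : Type) [Fintype Ω] [DecidableEq Ω]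
        (P : Matrix Ω Ω ℝ) (pi : Ω → ℝ), IsRevMC P pi →
        ∀ f : Ω → ℝ,
          ∑ x, pi x *
              (⨆ t : ℕ, ((t : ℝ) + 1) ^ 2 *
                |(((P ^ (t + 2)) *ᵥ f) x - ((P ^ t) *ᵥ f) x) / 2| ^ 2) ≤
            C * ∑ x, pi x * (f x - ∑ y, pi y * f y) ^ 2 :=
  ⟨11 / 4, by norm_num, fun _ _ _ _ _ h f ↦
    maximal_inequality_ave_general h.1.1 h.1.2.2.1.1 h.2 f _⟩
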